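/- Let A be a d×n real matrix with d ≤ 5 or n ≤ 5. Then the tropical rank of A (the largest r such that A has a tropically nonsingular r×r submatrix) equals the Kapranov rank of A (the minimum of rank(Ã) over all lifts Ã of A over K). -/

import Mathlib

noncomputable section

/-- The field of generalized power series over `ℂ` with real exponents and
well-ordered support. -/
abbrev K : Type := HahnSeries ℝ ℂ

/-- An `m × m` real matrix is tropically singular if the minimum over all permutations `σ`
of `∑ i, M i (σ i)` is attained by at least two distinct permutations. -/
def TropSingular {m : ℕ} (M : Matrix (Fin m) (Fin m) ℝ) : Prop :=
  ∃ σ τ : Equiv.Perm (Fin m), σ ≠ τ ∧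
    (∑ i, M i (σ i)) = (∑ i, M i (τ i)) ∧
    ∀ ρ : Equiv.Perm (Fin m), (∑ i, M i (σ i)) ≤ ∑ i, M i (ρ i)

/-- `B` is a lift of the real matrix `A` over `K`: every entry of `B` is nonzero and its
valuation (order, the smallest exponent of the support) equals the corresponding entry of `A`. -/
def IsLift {d n : ℕ} (A : Matrix (Fin d) (Fin n) ℝ) (B : Matrix (Fin d) (Fin n) K) : Prop :=
  ∀ i j, B i j ≠ 0 ∧ (B i j).order = A i j

/-- The tropical rank of `A`: the largest `r` such that `A` has a tropically nonsingular
`r × r` submatrix. -/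
noncomputable def tropicalRank {d n : ℕ} (A : Matrix (Fin d) (Fin n) ℝ) : ℕ :=
  sSup {r : ℕ | ∃ (ri : Fin r → Fin d) (ci : Fin r → Fin n),
    Function.Injective ri ∧ Function.Injective ci ∧ ¬ TropSingular (A.submatrix ri ci)}

/-- The Kapranov rank of `A`: the minimum of `rank B` over all lifts `B` of `A` over `K`. -/
noncomputable def kapranovRank {d n : ℕ} (A : Matrix (Fin d) (Fin n) ℝ) : ℕ :=
  sInf {k : ℕ | ∃ B : Matrix (Fin d) (Fin n) K, IsLift A B ∧ B.rank = k}

/-! ### Maximal minors -/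

lemma fixedPolicy {d : ℕ} (B : Matrix (Fin d) (Fin d) ℝ) (h : TropSingular B) :
    ∃ l : Fin d → ℝ, ∀ i, ∃ j, j ≠ i ∧ l j + B j i ≤ l i + B i i := by
  obtain ⟨π, hπ, hsum⟩ : ∃ π : Equiv.Perm (Fin d), π ≠ 1 ∧
      ∑ i, (B (π i) i - B i i) ≤ 0 := by
    obtain ⟨σ, τ, hne, heq, hmin⟩ := h
    have key : ∀ ρ : Equiv.Perm (Fin d), ρ ≠ 1 → (∑ i, B i (ρ i)) ≤ ∑ i, B i i →
        ∃ π : Equiv.Perm (Fin d), π ≠ 1 ∧ ∑ i, (B (π i) i - B i i) ≤ 0 := by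
      intro ρ hρ hle
      refine ⟨ρ⁻¹, by simpa using hρ, ?_⟩
      rw [Finset.sum_sub_distrib]
      have : ∑ i, B (ρ⁻¹ i) i = ∑ i, B i (ρ i) := by
        rw [← Equiv.sum_comp ρ]; simp
      rw [this]; linarith
    have h1 := hmin 1
    simp only [Equiv.Perm.coe_one, id] at h1
    by_cases hs : σ = 1
    · exact key τ (fun h => hne (hs.trans h.symm)) (heq ▸ h1)
    · exact key σ hs h1
  set w : Fin d → ℝ := fun i => B (π i) i - B i i with hw
  set N := orderOf π with hN
  have hNpos : 0 < N := orderOf_pos π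
  have hNr : (0:ℝ) < N := by exact_mod_cast hNpos
  set S : ℕ → Fin d → ℝ := fun t i => ∑ s ∈ Finset.range t, w ((π ^ s) i) with hS
  have hS1 : ∀ t i, S (t+1) i = w i + S t (π i) := by
    intro t i
    simp only [hS]
    rw [Finset.sum_range_succ', add_comm]
    simp [pow_succ]
  have hSN : ∀ i, S N (π i) = S N i := by
    intro i
    have h1 := hS1 N i
    have h2 : S (N+1) i = S N i + w i := by
      simp only [hS]
      rw [Finset.sum_range_succ, hN, pow_orderOf_eq_one]; simp
    linarith
  set L : Fin d → ℝ := fun i => (∑ t ∈ Finset.range N, S t i) / N with hL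
  have hLeq : ∀ i, L (π i) + w i = L i + S N i / N := by
    intro i
    have h1 : ∑ t ∈ Finset.range N, S (t+1) i = N * w i + ∑ t ∈ Finset.range N, S t (π i) := by
      simp only [hS1, Finset.sum_add_distrib]; simp
    have h2 : ∑ t ∈ Finset.range N, S (t+1) i = ∑ t ∈ Finset.range N, S t i + S N i := by
      have a := Finset.sum_range_succ (fun t => S t i) N
      have b := Finset.sum_range_succ' (fun t => S t i) N
      have c : S 0 i = 0 := by simp [hS]
      simp only [c] at b
      linarith
    simp only [hL]
    field_simp
    linarith
  have htot : ∑ i, S N i ≤ 0 := by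
    have : ∑ i, S N i = N * ∑ i, w i := by
      simp only [hS]
      rw [Finset.sum_comm]
      have : ∀ s ∈ Finset.range N, ∑ i, w ((π ^ s) i) = ∑ i, w i := fun s _ =>
        Equiv.sum_comp (π ^ s) w
      rw [Finset.sum_congr rfl this]; simp
    rw [this]
    exact mul_nonpos_of_nonneg_of_nonpos hNr.le hsum
  have hfix : ∀ i, π i = i → S N i = 0 := by
    intro i hi
    have : ∀ s, (π ^ s) i = i := fun s => by
      induction s with
      | zero => simp
      | succ s ih => rw [pow_succ]; simp [hi, ih]
    simp [hS, this, hw, hi]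
  obtain ⟨i0, hi0, hi0'⟩ : ∃ i0, π i0 ≠ i0 ∧ S N i0 ≤ 0 := by
    by_contra hcon
    push Not at hcon
    obtain ⟨m, hm⟩ : ∃ m, π m ≠ m := by
      by_contra hh; push Not at hh; exact hπ (Equiv.ext hh)
    have : 0 < ∑ i, S N i := by
      apply Finset.sum_pos'
      · intro i _
        by_cases hi : π i = i
        · rw [hfix i hi]
        · exact (hcon i hi).le
      · exact ⟨m, Finset.mem_univ _, hcon m hm⟩
    linarith
  classical
  refine ⟨fun i => if π i ≠ i ∧ S N i ≤ 0 then L i else L i0 + B i0 i - B i i, ?_⟩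
  intro i
  by_cases hi : π i ≠ i ∧ S N i ≤ 0
  · refine ⟨π i, hi.1, ?_⟩
    have h2 : π (π i) ≠ π i ∧ S N (π i) ≤ 0 := ⟨fun h => hi.1 (π.injective h), by rw [hSN]; exact hi.2⟩
    simp only [if_pos hi, if_pos h2]
    have := hLeq i
    have h3 : S N i / N ≤ 0 := div_nonpos_of_nonpos_of_nonneg hi.2 hNr.le
    simp only [hw] at this
    linarith
  · refine ⟨i0, ?_, ?_⟩
    · rintro rfl; exact hi ⟨hi0, hi0'⟩
    · have h0 : π i0 ≠ i0 ∧ S N i0 ≤ 0 := ⟨hi0, hi0'⟩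
      simp only [if_neg hi, if_pos h0]; linarith

lemma maxMinor {d n : ℕ} (A : Fin d → Fin n → ℝ)
    (h : ∀ s : Fin d → Fin n, TropSingular (fun i j => A i (s j) : Matrix (Fin d) (Fin d) ℝ)) :
    ∃ l : Fin d → ℝ, ∀ k i, ∃ j, j ≠ i ∧ l j + A j k ≤ l i + A i k := by
  rcases isEmpty_or_nonempty (Fin n) with hn | hn
  · exact ⟨0, fun k => hn.elim k⟩
  have key : ∀ T : Finset (Fin d), ∀ s : Fin d → Fin n, ∃ l : Fin d → ℝ,
      (∀ i ∈ T, ∀ k, ∃ j, j ≠ i ∧ l j + A j k ≤ l i + A i k) ∧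
      (∀ i ∉ T, ∃ j, j ≠ i ∧ l j + A j (s i) ≤ l i + A i (s i)) := by
    classical
    intro T
    induction T using Finset.induction_on with
    | empty =>
      intro s
      obtain ⟨l, hl⟩ := fixedPolicy _ (h s)
      exact ⟨l, by simp, fun i _ => hl i⟩
    | insert i T hi ih =>
      intro s
      choose l hl1 hl2 using fun k => ih (Function.update s i k)
      set ν : Fin d → ℝ := fun j => Finset.univ.inf' Finset.univ_nonempty (fun k => l k j - l k i) with hν
      have hνle : ∀ j k, ν j ≤ l k j - l k i := fun j k =>
        Finset.inf'_le (fun k => l k j - l k i) (Finset.mem_univ k)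
      have hνex : ∀ j, ∃ k, ν j = l k j - l k i := by
        intro j
        obtain ⟨k, _, hk⟩ := Finset.exists_mem_eq_inf' (Finset.univ_nonempty (α := Fin n)) (fun k => l k j - l k i)
        exact ⟨k, hk⟩
      refine ⟨ν, ?_, ?_⟩
      · intro m hm k
        rcases Finset.mem_insert.1 hm with rfl | hm
        · obtain ⟨j, hj, hle⟩ := hl2 k m hi
          simp only [Function.update_self] at hle
          obtain ⟨k', hk'⟩ := hνex m
          refine ⟨j, hj, ?_⟩
          have := hνle j k
          rw [hk']; linarith
        · obtain ⟨k', hk'⟩ := hνex m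
          obtain ⟨j, hj, hle⟩ := hl1 k' m hm k
          refine ⟨j, hj, ?_⟩
          have := hνle j k'
          rw [hk']; linarith
      · intro m hm
        have hmi : m ≠ i := fun h => hm (by simp [h])
        have hmT : m ∉ T := fun h => hm (by simp [h])
        obtain ⟨k', hk'⟩ := hνex m
        obtain ⟨j, hj, hle⟩ := hl2 k' m hmT
        simp only [Function.update_of_ne hmi] at hle
        refine ⟨j, hj, ?_⟩
        have := hνle j k'
        rw [hk']; linarith
  obtain ⟨l, hl, -⟩ := key Finset.univ (fun _ => Classical.arbitrary _)
  exact ⟨l, fun k i => hl i (Finset.mem_univ i) k⟩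

lemma exists_min_perm {m : ℕ} (M : Matrix (Fin m) (Fin m) ℝ) :
    ∃ σ : Equiv.Perm (Fin m), ∀ ρ : Equiv.Perm (Fin m), (∑ i, M i (σ i)) ≤ ∑ i, M i (ρ i) := by
  obtain ⟨σ, -, hσ⟩ := Finset.exists_min_image Finset.univ
    (fun ρ : Equiv.Perm (Fin m) => ∑ i, M i (ρ i)) Finset.univ_nonempty
  exact ⟨σ, fun ρ => hσ ρ (Finset.mem_univ _)⟩

lemma tropSingular_transpose {m : ℕ} {M : Matrix (Fin m) (Fin m) ℝ} (h : TropSingular M) :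
    TropSingular M.transpose := by
  have e : ∀ ρ : Equiv.Perm (Fin m), ∑ i, M.transpose i (ρ i) = ∑ i, M i (ρ⁻¹ i) := by
    intro ρ
    rw [← Equiv.sum_comp ρ⁻¹]; simp
  obtain ⟨σ, τ, hne, heq, hmin⟩ := h
  refine ⟨σ⁻¹, τ⁻¹, by simpa using hne, ?_, ?_⟩
  · rw [e, e, inv_inv, inv_inv]; exact heq
  · intro ρ; rw [e, e, inv_inv]; exact hmin ρ⁻¹

lemma tropSingular_of_col {m : ℕ} {M : Matrix (Fin m) (Fin m) ℝ} {a b : Fin m} (hab : a ≠ b)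
    (h : ∀ i, M i a = M i b) : TropSingular M := by
  classical
  obtain ⟨σ, hσ⟩ := exists_min_perm M
  refine ⟨σ, Equiv.swap a b * σ, ?_, ?_, hσ⟩
  · intro h1
    have : Equiv.swap a b = 1 := by
      have := congrArg (fun f => f * σ⁻¹) h1
      simpa using this.symm
    exact hab (Equiv.swap_eq_one_iff.1 this)
  · refine Finset.sum_congr rfl fun i _ => ?_
    simp only [Equiv.Perm.mul_apply, Equiv.swap_apply_def]
    split_ifs with h1 h2
    · rw [h1, h]
    · rw [h2, h]
    · rfl

lemma tropSingular_of_row {m : ℕ} {M : Matrix (Fin m) (Fin m) ℝ} {a b : Fin m} (hab : a ≠ b)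
    (h : ∀ i, M a i = M b i) : TropSingular M := by
  have := tropSingular_transpose (M := M.transpose) (tropSingular_of_col hab h)
  simpa using this

/-! ### Valuations and lifting columns into a subspace -/

def IsVal (f : K) (a : ℝ) : Prop := f.orderTop = (a : WithTop ℝ)

def Low (f : K) (a : ℝ) : Prop := (a : WithTop ℝ) ≤ f.orderTop

lemma IsVal.low {f : K} {a : ℝ} (h : IsVal f a) : Low f a := le_of_eq h.symm

lemma IsVal.ne_zero {f : K} {a : ℝ} (h : IsVal f a) : f ≠ 0 := by
  rintro rfl
  simp [IsVal] at h

lemma IsVal.order {f : K} {a : ℝ} (h : IsVal f a) : f.order = a := by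
  have := HahnSeries.order_eq_orderTop_of_ne_zero h.ne_zero
  rw [h] at this
  exact_mod_cast this

lemma isVal_of_order {f : K} {a : ℝ} (h : f ≠ 0) (h' : f.order = a) : IsVal f a := by
  have := HahnSeries.order_eq_orderTop_of_ne_zero h
  rw [h'] at this
  exact this.symm

lemma IsVal.mul {f g : K} {a b : ℝ} (hf : IsVal f a) (hg : IsVal g b) : IsVal (f * g) (a + b) := by
  unfold IsVal at *
  rw [HahnSeries.orderTop_mul, hf, hg]; rfl

lemma IsVal.neg {f : K} {a : ℝ} (hf : IsVal f a) : IsVal (-f) a := by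
  unfold IsVal at *
  rw [HahnSeries.orderTop_neg, hf]

lemma Low.mul {f g : K} {a b : ℝ} (hf : Low f a) (hg : Low g b) : Low (f * g) (a + b) := by
  unfold Low at *
  rw [HahnSeries.orderTop_mul]
  exact add_le_add hf hg

lemma Low.mono {f : K} {a b : ℝ} (hf : Low f a) (h : b ≤ a) : Low f b :=
  le_trans (by exact_mod_cast h) hf

lemma low_zero (a : ℝ) : Low 0 a := by simp [Low]

lemma low_iff {f : K} {a : ℝ} : Low f a ↔ ∀ e < a, f.coeff e = 0 := by
  unfold Low
  rw [HahnSeries.le_orderTop_iff_forall]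
  constructor
  · intro h e he
    exact h e (by exact_mod_cast he)
  · intro h e he
    exact h e (by exact_mod_cast he)

lemma isVal_iff {f : K} {a : ℝ} : IsVal f a ↔ Low f a ∧ f.coeff a ≠ 0 := by
  constructor
  · intro h
    exact ⟨h.low, HahnSeries.coeff_orderTop_ne h⟩
  · rintro ⟨h1, h2⟩
    exact le_antisymm (HahnSeries.orderTop_le_of_coeff_ne_zero h2) h1

lemma isVal_single (a : ℝ) {c : ℂ} (hc : c ≠ 0) : IsVal (HahnSeries.single a c : K) a :=
  HahnSeries.orderTop_single hc

lemma isVal_one : IsVal (1 : K) 0 := by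
  simp [IsVal]

lemma isVal_sub_single (u v : ℝ) {c c' : ℂ} (hc : c ≠ 0) (hc' : c' ≠ 0) (h : c ≠ c') :
    IsVal (HahnSeries.single u c - HahnSeries.single v c' : K) (min u v) := by
  rw [isVal_iff, low_iff]
  simp only [HahnSeries.coeff_sub, HahnSeries.coeff_single]
  refine ⟨fun e he => ?_, ?_⟩
  · have h1 : e ≠ u := (lt_of_lt_of_le he (min_le_left _ _)).ne
    have h2 : e ≠ v := (lt_of_lt_of_le he (min_le_right _ _)).ne
    simp [h1, h2]
  · rcases lt_trichotomy u v with h1 | h1 | h1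
    · simp [min_eq_left h1.le, h1.ne, hc]
    · simp [h1, sub_eq_zero, h]
    · simp [min_eq_right h1.le, h1.ne, hc']

lemma generic_comb {m : ℕ} (c : Fin m → Fin m → ℂ) (hc : ∀ j, c j j ≠ 0) :
    ∃ μ : Fin m → ℂ, ∀ j, ∑ i, μ i * c i j ≠ 0 := by
  let f : Fin m → Polynomial ℂ := fun j => ∑ i : Fin m, Polynomial.monomial (i : ℕ) (c i j)
  have hf : ∀ j, f j ≠ 0 := by
    intro j h
    have := congrArg (fun p => Polynomial.coeff p (j : ℕ)) h
    simp only [f, Polynomial.finsetSum_coeff, Polynomial.coeff_monomial, Polynomial.coeff_zero] at this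
    rw [Finset.sum_eq_single j] at this
    · simp [hc j] at this
    · intro b _ hb
      rw [if_neg]; intro h'; exact hb (Fin.ext h')
    · simp
  have hp : ∏ j, f j ≠ 0 := Finset.prod_ne_zero_iff.2 fun j _ => hf j
  obtain ⟨s, hs⟩ : ∃ s, (∏ j, f j).eval s ≠ 0 := by
    by_contra hcon
    push Not at hcon
    exact hp (Polynomial.funext (by simpa using hcon))
  rw [Polynomial.eval_prod, Finset.prod_ne_zero_iff] at hs
  refine ⟨fun i => s ^ (i : ℕ), fun j => ?_⟩
  have := hs j (Finset.mem_univ j)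
  simp only [f, Polynomial.eval_finsetSum, Polynomial.eval_monomial] at this
  simpa [mul_comm] using this

lemma lift_column {m : ℕ} (V : Submodule K (Fin m → K)) (x : Fin m → ℝ)
    (h : ∀ i, ∃ v ∈ V, IsVal (v i) (x i) ∧ ∀ j, Low (v j) (x j)) :
    ∃ v ∈ V, ∀ i, IsVal (v i) (x i) := by
  choose v hv hv1 hv2 using h
  obtain ⟨μ, hμ⟩ := generic_comb (fun i j => (v i j).coeff (x j)) (fun j => (isVal_iff.1 (hv1 j)).2)
  refine ⟨∑ i, (HahnSeries.C (μ i) : K) • v i, Submodule.sum_mem _ fun i _ => V.smul_mem _ (hv i), ?_⟩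
  have hco : ∀ j e, ((∑ i, (HahnSeries.C (μ i) : K) • v i) j).coeff e =
      ∑ i, μ i * (v i j).coeff e := by
    intro j e
    rw [Finset.sum_apply, HahnSeries.coeff_sum]
    refine Finset.sum_congr rfl fun i _ => ?_
    rw [Pi.smul_apply, smul_eq_mul, HahnSeries.C_mul_eq_smul, HahnSeries.coeff_smul, smul_eq_mul]
  intro j
  rw [isVal_iff, low_iff]
  refine ⟨fun e he => ?_, ?_⟩
  · rw [hco]
    exact Finset.sum_eq_zero fun i _ => by rw [low_iff.1 (hv2 i j) e he, mul_zero]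
  · rw [hco]; exact hμ j

/-- The rows `x` can be lifted inside a subspace of dimension at most `r`. -/
def Kap {κ : Type} (r : ℕ) (x : Fin 5 → κ → ℝ) : Prop :=
  ∃ V : Submodule K (Fin 5 → K), Module.finrank K V ≤ r ∧
    ∀ k, ∃ v ∈ V, ∀ i, IsVal (v i) (x i k)

lemma Kap.perm {κ : Type} {r : ℕ} {x : Fin 5 → κ → ℝ} (s : Equiv.Perm (Fin 5))
    (h : Kap r (fun i => x (s i))) : Kap r x := by
  obtain ⟨V, hV, h⟩ := h
  refine ⟨V.map (LinearMap.funLeft K K s.symm), (Submodule.finrank_map_le _ _).trans hV, fun k => ?_⟩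
  obtain ⟨v, hv, hv'⟩ := h k
  refine ⟨_, Submodule.mem_map_of_mem hv, fun i => ?_⟩
  have := hv' (s.symm i)
  simpa [LinearMap.funLeft_apply] using this

lemma Kap.scale {κ : Type} {r : ℕ} {x : Fin 5 → κ → ℝ} (y : Fin 5 → ℝ)
    (h : Kap r (fun i k => x i k + y i)) : Kap r x := by
  obtain ⟨V, hV, h⟩ := h
  let φ : (Fin 5 → K) →ₗ[K] (Fin 5 → K) :=
    LinearMap.pi fun i => (HahnSeries.single (-y i) (1 : ℂ) : K) • LinearMap.proj i
  refine ⟨V.map φ, (Submodule.finrank_map_le _ _).trans hV, fun k => ?_⟩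
  obtain ⟨v, hv, hv'⟩ := h k
  refine ⟨_, Submodule.mem_map_of_mem hv, fun i => ?_⟩
  have := (isVal_single (-y i) one_ne_zero).mul (hv' i)
  have e : -y i + (x i k + y i) = x i k := by ring
  rw [e] at this
  simpa [φ] using this

/-- Two by two minors. -/
def minor2 (B0 B1 : Fin 5 → K) (i j : Fin 5) : K := B0 i * B1 j - B0 j * B1 i

def Realizes (B0 B1 : Fin 5 → K) (p : Fin 5 → Fin 5 → ℝ) : Prop :=
  ∀ i j, i ≠ j → IsVal (minor2 B0 B1 i j) (p i j)

lemma Realizes.symm {B0 B1 : Fin 5 → K} {p : Fin 5 → Fin 5 → ℝ} (h : Realizes B0 B1 p)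
    {i j : Fin 5} (hij : i ≠ j) : p i j = p j i := by
  have h1 := h i j hij
  have h2 := (h j i hij.symm).neg
  have e : - minor2 B0 B1 j i = minor2 B0 B1 i j := by unfold minor2; ring
  rw [e] at h2
  rw [← h1.order, ← h2.order]

lemma kap_three {κ : Type} (x : Fin 5 → κ → ℝ) {B0 B1 : Fin 5 → K} {p : Fin 5 → Fin 5 → ℝ}
    (hp : Realizes B0 B1 p)
    (h : ∀ k i j, j ≠ i → ∃ l, l ≠ i ∧ l ≠ j ∧ p i l + x l k ≤ p i j + x j k) : Kap 3 x := by
  let φ : (Fin 5 → K) →ₗ[K] (Fin 2 → K) := LinearMap.pi ![Fintype.linearCombination K B0, Fintype.linearCombination K B1]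
  have hφ : ∀ v, φ v = 0 ↔ ∑ i, v i * B0 i = 0 ∧ ∑ i, v i * B1 i = 0 := by
    intro v
    simp [φ, funext_iff, Fin.forall_fin_two, Fintype.linearCombination_apply]
  have hdet : minor2 B0 B1 0 1 ≠ 0 := (hp 0 1 (by decide)).ne_zero
  have hsurj : Function.Surjective φ := by
    intro w
    refine ⟨![(w 0 * B1 1 - w 1 * B0 1) / minor2 B0 B1 0 1,
      (B0 0 * w 1 - B1 0 * w 0) / minor2 B0 B1 0 1, 0, 0, 0], ?_⟩
    funext i
    fin_cases i
    · simp [φ, Fintype.linearCombination_apply, Fin.sum_univ_five]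
      field_simp
      unfold minor2; ring
    · simp [φ, Fintype.linearCombination_apply, Fin.sum_univ_five]
      field_simp
      unfold minor2; ring
  refine ⟨LinearMap.ker φ, ?_, fun k => ?_⟩
  · have h1 := LinearMap.finrank_range_add_finrank_ker φ
    rw [LinearMap.range_eq_top.2 hsurj] at h1
    simp at h1
    omega
  apply lift_column _ (fun i => x i k)
  intro i
  obtain ⟨⟨j, m⟩, hmem, hmin⟩ := Finset.exists_min_image
    (Finset.univ.filter fun q : Fin 5 × Fin 5 => q.1 ≠ i ∧ q.2 ≠ i ∧ q.1 ≠ q.2)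
    (fun q => p q.1 q.2 + x q.1 k + x q.2 k)
    (by
      have : ∀ i : Fin 5, ∃ q : Fin 5 × Fin 5, q.1 ≠ i ∧ q.2 ≠ i ∧ q.1 ≠ q.2 := by decide
      obtain ⟨q, hq⟩ := this i
      exact ⟨q, by simpa using hq⟩)
  simp only [Finset.mem_filter, Finset.mem_univ, true_and] at hmem hmin
  obtain ⟨hji, hmi, hjm⟩ := hmem
  have key : ∀ a b : Fin 5, a ≠ i → b ≠ i → a ≠ b →
      (∀ q : Fin 5 × Fin 5, q.1 ≠ i ∧ q.2 ≠ i ∧ q.1 ≠ q.2 → p a b + x a k + x b k ≤ p q.1 q.2 + x q.1 k + x q.2 k) →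
      p a b + x a k ≤ p i b + x i k := by
    intro a b ha hb hab hq
    obtain ⟨l, hl1, hl2, hl3⟩ := h k b i hb.symm
    have := hq (l, b) ⟨hl2, hb, hl1⟩
    simp only at this
    rw [hp.symm hl1, hp.symm hb.symm] at *
    linarith
  have k1 := key j m hji hmi hjm hmin
  have k2 := key m j hmi hji hjm.symm (by
    intro q hq
    have := hmin q hq
    rw [hp.symm hjm.symm]; linarith)
  set e : ℝ := x i k - p j m with he
  let u : Fin 5 → K := Pi.single i (minor2 B0 B1 j m) - Pi.single j (minor2 B0 B1 i m) + Pi.single m (minor2 B0 B1 i j)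
  refine ⟨(HahnSeries.single e (1:ℂ) : K) • u, ?_, ?_, ?_⟩
  · apply Submodule.smul_mem
    rw [LinearMap.mem_ker, hφ]
    constructor
    · simp only [u, Pi.add_apply, Pi.sub_apply, add_mul, sub_mul, Finset.sum_add_distrib, Finset.sum_sub_distrib]
      simp [Pi.single_apply, minor2]; ring
    · simp only [u, Pi.add_apply, Pi.sub_apply, add_mul, sub_mul, Finset.sum_add_distrib, Finset.sum_sub_distrib]
      simp [Pi.single_apply, minor2]; ring
  · have h1 := (isVal_single e one_ne_zero).mul (hp j m hjm)
    have : e + p j m = x i k := by simp [he]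
    rw [this] at h1
    simpa [u, hji.symm, hmi.symm] using h1
  · intro a
    by_cases hai : a = i
    · subst hai
      have h1 := (isVal_single e one_ne_zero).mul (hp j m hjm)
      have : e + p j m = x a k := by simp [he]
      rw [this] at h1
      simpa [u, hji.symm, hmi.symm] using h1.low
    by_cases haj : a = j
    · subst haj
      have h1 := ((isVal_single e one_ne_zero).mul (hp i m hmi.symm).neg).low.mono (b := x a k) (by simp only [he]; linarith)
      simpa [u, hai, hjm] using h1
    by_cases ham : a = m
    · subst ham
      have h1 := ((isVal_single e one_ne_zero).mul (hp i j hji.symm)).low.mono (b := x a k) (by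
        rw [hp.symm hjm.symm] at k2
        simp only [he]; linarith)
      simpa [u, hai, haj] using h1
    · have : u a = 0 := by simp [u, hai, haj, ham]
      rw [Pi.smul_apply, this, smul_eq_mul, mul_zero]
      exact low_zero _

lemma kap_two {κ : Type} (x : Fin 5 → κ → ℝ) {B0 B1 : Fin 5 → K} {p : Fin 5 → Fin 5 → ℝ}
    (hp : Realizes B0 B1 p)
    (h : ∀ k i j l, i ≠ j → i ≠ l → j ≠ l →
      p i l + x j k ≤ p i j + x l k ∨ p j l + x i k ≤ p i j + x l k) : Kap 2 x := by
  refine ⟨Submodule.span K {B0, B1}, ?_, fun k => ?_⟩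
  · classical
    have := finrank_span_finset_le_card (R := K) ({B0, B1} : Finset (Fin 5 → K))
    simp only [Finset.coe_insert, Finset.coe_singleton] at this
    exact this.trans Finset.card_le_two
  apply lift_column _ (fun i => x i k)
  intro i
  obtain ⟨m, hmem, hmin⟩ := Finset.exists_min_image
    (Finset.univ.filter fun q : Fin 5 => q ≠ i)
    (fun q => p q i - x q k)
    (by
      have : ∀ i : Fin 5, ∃ q : Fin 5, q ≠ i := by decide
      obtain ⟨q, hq⟩ := this i
      exact ⟨q, by simpa using hq⟩)
  simp only [Finset.mem_filter, Finset.mem_univ, true_and] at hmem hmin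
  have key : ∀ j, j ≠ m → p m i - x i k ≤ p m j - x j k := by
    intro j hj
    by_cases hji : j = i
    · rw [hji]
    have h1 := hmin j hji
    rcases h k m j i hj.symm hmem hji with h2 | h2 <;> linarith
  set e : ℝ := x i k - p m i with he
  have hval : ∀ j, ((HahnSeries.single e (1:ℂ) : K) • (B0 m • B1 - B1 m • B0)) j =
      HahnSeries.single e (1:ℂ) * minor2 B0 B1 m j := by
    intro j; simp [minor2]; ring
  refine ⟨(HahnSeries.single e (1:ℂ) : K) • (B0 m • B1 - B1 m • B0), ?_, ?_, ?_⟩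
  · apply Submodule.smul_mem
    apply Submodule.sub_mem
    · exact Submodule.smul_mem _ _ (Submodule.subset_span (by simp))
    · exact Submodule.smul_mem _ _ (Submodule.subset_span (by simp))
  · rw [hval]
    have h1 := (isVal_single e one_ne_zero).mul (hp m i hmem)
    have : e + p m i = x i k := by simp [he]
    rwa [this] at h1
  · intro j
    rw [hval]
    by_cases hj : j = m
    · subst hj
      have : minor2 B0 B1 j j = 0 := by simp [minor2]
      rw [this, mul_zero]; exact low_zero _
    · exact ((isVal_single e one_ne_zero).mul (hp m j (Ne.symm hj))).low.mono (by
        have := key j hj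
        simp only [he]; linarith)

lemma kap_four {κ : Type} (x : Fin 5 → κ → ℝ) (q : Fin 5 → ℝ)
    (h : ∀ k i, ∃ j, j ≠ i ∧ q j + x j k ≤ q i + x i k) : Kap 4 x := by
  let φ : (Fin 5 → K) →ₗ[K] K := Fintype.linearCombination K fun i => (HahnSeries.single (q i) (1:ℂ) : K)
  have hφ : ∀ v, φ v = ∑ i, v i * HahnSeries.single (q i) (1:ℂ) := by
    intro v
    simp [φ, Fintype.linearCombination_apply]
  have hn : ∀ i, (HahnSeries.single (q i) (1:ℂ) : K) ≠ 0 := fun i => (isVal_single _ one_ne_zero).ne_zero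
  have hsurj : Function.Surjective φ := by
    intro w
    refine ⟨Pi.single 0 (w / HahnSeries.single (q 0) (1:ℂ)), ?_⟩
    rw [hφ]
    simp only [Pi.single_apply, ite_mul, zero_mul, Finset.sum_ite_eq', Finset.mem_univ, if_true]
    exact div_mul_cancel₀ _ (hn 0)
  refine ⟨LinearMap.ker φ, ?_, fun k => ?_⟩
  · have h1 := LinearMap.finrank_range_add_finrank_ker φ
    rw [LinearMap.range_eq_top.2 hsurj] at h1
    simp at h1
    omega
  apply lift_column _ (fun i => x i k)
  intro i
  obtain ⟨j, hji, hle⟩ := h k i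
  let u : Fin 5 → K := Pi.single i (HahnSeries.single (x i k) (1:ℂ)) -
    Pi.single j (HahnSeries.single (x i k + q i - q j) (1:ℂ))
  refine ⟨u, ?_, ?_, ?_⟩
  · rw [LinearMap.mem_ker, hφ]
    simp only [u, Pi.sub_apply, sub_mul, Finset.sum_sub_distrib]
    simp [Pi.single_apply, HahnSeries.single_mul_single]
  · simpa [u, hji.symm] using isVal_single (x i k) (one_ne_zero (α := ℂ))
  · intro a
    by_cases hai : a = i
    · subst hai
      simpa [u, hji.symm] using (isVal_single (x a k) (one_ne_zero (α := ℂ))).low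
    by_cases haj : a = j
    · subst haj
      have := (isVal_single (x i k + q i - q a) (one_ne_zero (α := ℂ))).neg.low.mono (b := x a k) (by linarith)
      simpa [u, hai] using this
    · have : u a = 0 := by simp [u, hai, haj]
      rw [this]; exact low_zero _

lemma kap_one {κ : Type} (x : Fin 5 → κ → ℝ) (a : Fin 5 → ℝ) (b : κ → ℝ)
    (h : ∀ i k, x i k = a i + b k) : Kap 1 x := by
  refine ⟨Submodule.span K {fun i => HahnSeries.single (a i) (1:ℂ)}, by
    have := finrank_span_finset_le_card (R := K) ({fun i => HahnSeries.single (a i) (1:ℂ)} : Finset (Fin 5 → K))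
    rw [Finset.card_singleton, Finset.coe_singleton] at this
    exact this, fun k => ?_⟩
  refine ⟨(HahnSeries.single (b k) (1:ℂ) : K) • _, Submodule.smul_mem _ _ (Submodule.subset_span rfl), fun i => ?_⟩
  have := (isVal_single (b k) (one_ne_zero (α := ℂ))).mul (isVal_single (a i) (one_ne_zero (α := ℂ)))
  rw [add_comm, ← h] at this
  simpa using this

lemma kap_five {κ : Type} (x : Fin 5 → κ → ℝ) : Kap 5 x := by
  refine ⟨⊤, by simp, fun k => ⟨fun i => HahnSeries.single (x i k) (1:ℂ), trivial, fun i => isVal_single _ one_ne_zero⟩⟩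

lemma kap_zero {κ : Type} [IsEmpty κ] (x : Fin 5 → κ → ℝ) : Kap 0 x :=
  ⟨⊥, by simp, fun k => isEmptyElim k⟩

/-- The valuations of the minors of a caterpillar with spine `0, 1`. -/
def spineP (a b : Fin 5 → ℝ) : Fin 5 → Fin 5 → ℝ :=
  ![![0, 0, b 2, b 3, b 4], ![0, 0, a 2, a 3, a 4],
    ![b 2, a 2, 0, min (a 2 + b 3) (a 3 + b 2), min (a 2 + b 4) (a 4 + b 2)],
    ![b 3, a 3, min (a 2 + b 3) (a 3 + b 2), 0, min (a 3 + b 4) (a 4 + b 3)],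
    ![b 4, a 4, min (a 2 + b 4) (a 4 + b 2), min (a 3 + b 4) (a 4 + b 3), 0]]

lemma spine_realizes (a b : Fin 5 → ℝ) : ∃ B0 B1, Realizes B0 B1 (spineP a b) := by
  let B0 : Fin 5 → K := ![1, 0, HahnSeries.single (a 2) 1, HahnSeries.single (a 3) 1, HahnSeries.single (a 4) 1]
  let B1 : Fin 5 → K := ![0, 1, HahnSeries.single (b 2) 1, HahnSeries.single (b 3) 2, HahnSeries.single (b 4) 3]
  refine ⟨B0, B1, ?_⟩
  have hlt : ∀ i j, i < j → IsVal (minor2 B0 B1 i j) (spineP a b i j) := by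
    intro i j hij
    fin_cases i <;> fin_cases j <;> first | (exfalso; revert hij; decide) | skip
    · simpa [minor2, B0, B1, spineP] using isVal_one
    · simpa [minor2, B0, B1, spineP] using isVal_single (b 2) (c := 1) (by norm_num)
    · simpa [minor2, B0, B1, spineP] using isVal_single (b 3) (c := 2) (by norm_num)
    · simpa [minor2, B0, B1, spineP] using isVal_single (b 4) (c := 3) (by norm_num)
    · simpa [minor2, B0, B1, spineP] using (isVal_single (a 2) (c := 1) (by norm_num)).neg
    · simpa [minor2, B0, B1, spineP] using (isVal_single (a 3) (c := 1) (by norm_num)).neg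
    · simpa [minor2, B0, B1, spineP] using (isVal_single (a 4) (c := 1) (by norm_num)).neg
    · simpa [minor2, B0, B1, spineP, HahnSeries.single_mul_single] using isVal_sub_single (a 2 + b 3) (a 3 + b 2) (c := 2) (c' := 1) (by norm_num) (by norm_num) (by norm_num)
    · simpa [minor2, B0, B1, spineP, HahnSeries.single_mul_single] using isVal_sub_single (a 2 + b 4) (a 4 + b 2) (c := 3) (c' := 1) (by norm_num) (by norm_num) (by norm_num)
    · simpa [minor2, B0, B1, spineP, HahnSeries.single_mul_single] using isVal_sub_single (a 3 + b 4) (a 4 + b 3) (c := 3) (c' := 2) (by norm_num) (by norm_num) (by norm_num)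
  intro i j hij
  rcases lt_or_gt_of_ne hij with h | h
  · exact hlt i j h
  · have h1 := (hlt j i h).neg
    have e : - minor2 B0 B1 j i = minor2 B0 B1 i j := by unfold minor2; ring
    have e2 : spineP a b j i = spineP a b i j := by
      fin_cases i <;> fin_cases j <;> rfl
    rwa [e, e2] at h1

/-! ### Caterpillars -/

def T4 (a b c d : ℝ) : Prop :=
  (b ≤ a ∨ c ≤ a ∨ d ≤ a) ∧ (a ≤ b ∨ c ≤ b ∨ d ≤ b) ∧ (a ≤ c ∨ b ≤ c ∨ d ≤ c) ∧
    (a ≤ d ∨ b ≤ d ∨ c ≤ d)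

def T3 (a b c : ℝ) : Prop := (b ≤ a ∨ c ≤ a) ∧ (a ≤ b ∨ c ≤ b) ∧ (a ≤ c ∨ b ≤ c)

lemma spine_leaf (x0 x1 x2 x3 x4 a2 a3 a4 b2 b3 b4 : ℝ)
    (C0 : T4 x1 (b2 + x2) (b3 + x3) (b4 + x4)) (C1 : T4 x0 (a2 + x2) (a3 + x3) (a4 + x4))
    (h3 : ¬ (a2 + x2 = a3 + x3 ∧ a2 + x2 < a4 + x4 ∧ a2 + x2 < x0 ∧
      b2 + x2 = b3 + x3 ∧ b2 + x2 < b4 + x4 ∧ b2 + x2 < x1))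
    (h4 : ¬ (a2 + x2 = a4 + x4 ∧ a2 + x2 < a3 + x3 ∧ a2 + x2 < x0 ∧
      b2 + x2 = b4 + x4 ∧ b2 + x2 < b3 + x3 ∧ b2 + x2 < x1)) :
    T4 (b2 + x0) (a2 + x1) (min (a2 + b3) (a3 + b2) + x3) (min (a2 + b4) (a4 + b2) + x4) := by
  unfold T4 at C0 C1 ⊢
  obtain ⟨C00, C01, C02, C03⟩ := C0
  obtain ⟨C10, C11, C12, C13⟩ := C1
  refine ⟨?_, ?_, ?_, ?_⟩ <;> rcases min_cases (a2 + b3) (a3 + b2) with ⟨e1, e2⟩ | ⟨e1, e2⟩ <;> rcases min_cases (a2 + b4) (a4 + b2) with ⟨f1, f2⟩ | ⟨f1, f2⟩ <;> rw [e1, f1] <;> clear e1 f1 <;> grind (splits := 40)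

def Tr (x : Fin 5 → ℝ) (p q : Fin 5 → ℝ) (i j k l m : Fin 5) : Prop :=
  p k + x k = p l + x l ∧ p k + x k < p m + x m ∧ p k + x k < p j + x j ∧
    q k + x k = q l + x l ∧ q k + x k < q m + x m ∧ q k + x k < q i + x i

lemma t4_ex (y : Fin 5 → ℝ) (i a b c d : Fin 5) (ha : a ≠ i) (hb : b ≠ i) (hc : c ≠ i) (hd : d ≠ i)
    (hab : a ≠ b) (hac : a ≠ c) (had : a ≠ d) (hbc : b ≠ c) (hbd : b ≠ d) (hcd : c ≠ d)
    (h : T4 (y a) (y b) (y c) (y d)) : ∀ j, j ≠ i → ∃ l, l ≠ i ∧ l ≠ j ∧ y l ≤ y j := by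
  obtain ⟨h1, h2, h3, h4⟩ := h
  intro j hj
  have : j = a ∨ j = b ∨ j = c ∨ j = d := by omega
  rcases this with rfl | rfl | rfl | rfl
  · rcases h1 with h | h | h
    exacts [⟨b, hb, hab.symm, h⟩, ⟨c, hc, hac.symm, h⟩, ⟨d, hd, had.symm, h⟩]
  · rcases h2 with h | h | h
    exacts [⟨a, ha, hab, h⟩, ⟨c, hc, hbc.symm, h⟩, ⟨d, hd, hbd.symm, h⟩]
  · rcases h3 with h | h | h
    exacts [⟨a, ha, hac, h⟩, ⟨b, hb, hbc, h⟩, ⟨d, hd, hcd.symm, h⟩]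
  · rcases h4 with h | h | h
    exacts [⟨a, ha, had, h⟩, ⟨b, hb, hbd, h⟩, ⟨c, hc, hcd, h⟩]

lemma T4.swap23 {a b c d : ℝ} (h : T4 a b c d) : T4 a c b d := by
  obtain ⟨h1, h2, h3, h4⟩ := h
  exact ⟨by tauto, by tauto, by tauto, by tauto⟩

lemma T4.rot {a b c d : ℝ} (h : T4 a b c d) : T4 a d b c := by
  obtain ⟨h1, h2, h3, h4⟩ := h
  exact ⟨by tauto, by tauto, by tauto, by tauto⟩

lemma others3 : ∀ i j : Fin 5, i ≠ j → ∃ k l m, k ≠ i ∧ l ≠ i ∧ m ≠ i ∧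
    k ≠ j ∧ l ≠ j ∧ m ≠ j ∧ k ≠ l ∧ k ≠ m ∧ l ≠ m := by decide

lemma spine3 {κ : Type} (x : Fin 5 → κ → ℝ) (a b : Fin 5 → ℝ)
    (C0 : ∀ c, T4 (x 1 c) (b 2 + x 2 c) (b 3 + x 3 c) (b 4 + x 4 c))
    (C1 : ∀ c, T4 (x 0 c) (a 2 + x 2 c) (a 3 + x 3 c) (a 4 + x 4 c))
    (h : ∀ c k l m, k ∈ ({2, 3, 4} : Finset (Fin 5)) → l ∈ ({2, 3, 4} : Finset (Fin 5)) →
      m ∈ ({2, 3, 4} : Finset (Fin 5)) → k ≠ l → k ≠ m → l ≠ m →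
      ¬ (a k + x k c = a l + x l c ∧ a k + x k c < a m + x m c ∧ a k + x k c < x 0 c ∧
      b k + x k c = b l + x l c ∧ b k + x k c < b m + x m c ∧ b k + x k c < x 1 c)) : Kap 3 x := by
  obtain ⟨B0, B1, hB⟩ := spine_realizes a b
  refine kap_three x hB fun c i => ?_
  have P := fun k l m (hk : k ∈ ({2, 3, 4} : Finset (Fin 5))) (hl : l ∈ ({2, 3, 4} : Finset (Fin 5)))
      (hm : m ∈ ({2, 3, 4} : Finset (Fin 5))) (h1 : k ≠ l) (h2 : k ≠ m) (h3 : l ≠ m) (D0) (D1) =>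
    spine_leaf (x 0 c) (x 1 c) (x k c) (x l c) (x m c) (a k) (a l) (a m) (b k) (b l) (b m) D0 D1
      (h c k l m hk hl hm h1 h2 h3) (h c k m l hk hm hl h2 h1 h3.symm)
  fin_cases i
  · refine t4_ex (fun l => spineP a b 0 l + x l c) 0 1 2 3 4 ?_ ?_ ?_ ?_ ?_ ?_ ?_ ?_ ?_ ?_ ?_
    any_goals decide
    simpa [spineP] using C0 c
  · refine t4_ex (fun l => spineP a b 1 l + x l c) 1 0 2 3 4 ?_ ?_ ?_ ?_ ?_ ?_ ?_ ?_ ?_ ?_ ?_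
    any_goals decide
    simpa [spineP] using C1 c
  · refine t4_ex (fun l => spineP a b 2 l + x l c) 2 0 1 3 4 ?_ ?_ ?_ ?_ ?_ ?_ ?_ ?_ ?_ ?_ ?_
    any_goals decide
    exact P 2 3 4 (by decide) (by decide) (by decide) (by decide) (by decide) (by decide) (C0 c) (C1 c)
  · refine t4_ex (fun l => spineP a b 3 l + x l c) 3 0 1 2 4 ?_ ?_ ?_ ?_ ?_ ?_ ?_ ?_ ?_ ?_ ?_
    any_goals decide
    have := P 3 2 4 (by decide) (by decide) (by decide) (by decide) (by decide) (by decide)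
      (C0 c).swap23 (C1 c).swap23
    rw [min_comm (a 3 + b 2)] at this
    exact this
  · refine t4_ex (fun l => spineP a b 4 l + x l c) 4 0 1 2 3 ?_ ?_ ?_ ?_ ?_ ?_ ?_ ?_ ?_ ?_ ?_
    any_goals decide
    have := P 4 2 3 (by decide) (by decide) (by decide) (by decide) (by decide) (by decide)
      (C0 c).rot (C1 c).rot
    rw [min_comm (a 4 + b 2), min_comm (a 4 + b 3)] at this
    exact this

def Q {κ : Type} (x : Fin 5 → κ → ℝ) (i : Fin 5) (q : Fin 5 → ℝ) : Prop :=
  ∀ c, ∀ j, j ≠ i → ∃ l, l ≠ i ∧ l ≠ j ∧ q l + x l c ≤ q j + x j c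

lemma ex_t4 (y : Fin 5 → ℝ) (i a b c d : Fin 5) (ha : a ≠ i) (hb : b ≠ i) (hc : c ≠ i) (hd : d ≠ i)
    (hab : a ≠ b) (hac : a ≠ c) (had : a ≠ d) (hbc : b ≠ c) (hbd : b ≠ d) (hcd : c ≠ d)
    (h : ∀ j, j ≠ i → ∃ l, l ≠ i ∧ l ≠ j ∧ y l ≤ y j) : T4 (y a) (y b) (y c) (y d) := by
  have key : ∀ l, l ≠ i → l = a ∨ l = b ∨ l = c ∨ l = d := by omega
  refine ⟨?_, ?_, ?_, ?_⟩
  · obtain ⟨l, h1, h2, h3⟩ := h a ha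
    rcases key l h1 with rfl | rfl | rfl | rfl <;> tauto
  · obtain ⟨l, h1, h2, h3⟩ := h b hb
    rcases key l h1 with rfl | rfl | rfl | rfl <;> tauto
  · obtain ⟨l, h1, h2, h3⟩ := h c hc
    rcases key l h1 with rfl | rfl | rfl | rfl <;> tauto
  · obtain ⟨l, h1, h2, h3⟩ := h d hd
    rcases key l h1 with rfl | rfl | rfl | rfl <;> tauto

lemma Q.t4 {κ : Type} {x : Fin 5 → κ → ℝ} {i : Fin 5} {q : Fin 5 → ℝ} (h : Q x i q) (c : κ)
    (a b e d : Fin 5) (ha : a ≠ i) (hb : b ≠ i) (hc : e ≠ i) (hd : d ≠ i)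
    (hab : a ≠ b) (hac : a ≠ e) (had : a ≠ d) (hbc : b ≠ e) (hbd : b ≠ d) (hcd : e ≠ d) :
    T4 (q a + x a c) (q b + x b c) (q e + x e c) (q d + x d c) :=
  ex_t4 (fun l => q l + x l c) i a b e d ha hb hc hd hab hac had hbc hbd hcd (h c)

lemma exists_perm5 : ∀ i j k l m : Fin 5, i ≠ j → i ≠ k → i ≠ l → i ≠ m → j ≠ k → j ≠ l → j ≠ m →
    k ≠ l → k ≠ m → l ≠ m → ∃ s : Equiv.Perm (Fin 5), s 0 = i ∧ s 1 = j ∧ s 2 = k ∧ s 3 = l ∧ s 4 = m := by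
  intro i j k l m h1 h2 h3 h4 h5 h6 h7 h8 h9 h10
  have inj : Function.Injective ![i, j, k, l, m] := by
    intro u v
    fin_cases u <;> fin_cases v <;> simp <;> tauto
  exact ⟨Equiv.ofBijective _ (Finite.injective_iff_bijective.1 inj), rfl, rfl, rfl, rfl, rfl⟩

lemma T4.shift {a b c d : ℝ} (s : ℝ) (h : T4 a b c d) {a' b' c' d' : ℝ} (ha : a' = a + s)
    (hb : b' = b + s) (hc : c' = c + s) (hd : d' = d + s) : T4 a' b' c' d' := by
  subst ha hb hc hd
  unfold T4 at *
  simpa using h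

lemma trouble3 {κ : Type} {x : Fin 5 → κ → ℝ} (hx : ¬ Kap 3 x) {i j : Fin 5} (hij : i ≠ j)
    {p q : Fin 5 → ℝ} (hp : Q x i p) (hq : Q x j q) :
    ∃ k l m c, k ≠ i ∧ l ≠ i ∧ m ≠ i ∧ k ≠ j ∧ l ≠ j ∧ m ≠ j ∧ k ≠ l ∧ k ≠ m ∧ l ≠ m ∧
      Tr (fun u => x u c) p q i j k l m := by
  by_contra hcon
  push Not at hcon
  apply hx
  obtain ⟨k, l, m, h1, h2, h3, h4, h5, h6, h7, h8, h9⟩ : ∃ k l m, k ≠ i ∧ l ≠ i ∧ m ≠ i ∧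
    k ≠ j ∧ l ≠ j ∧ m ≠ j ∧ k ≠ l ∧ k ≠ m ∧ l ≠ m := others3 i j hij
  obtain ⟨s, rfl, rfl, rfl, rfl, rfl⟩ := exists_perm5 i j k l m hij h1.symm h2.symm h3.symm h4.symm h5.symm
    h6.symm h7 h8 h9
  refine Kap.perm s (spine3 _ (fun u => q (s u) - q (s 0)) (fun u => p (s u) - p (s 1)) ?_ ?_ ?_)
  · intro c
    refine (hp.t4 c (s 1) (s 2) (s 3) (s 4) ?_ ?_ ?_ ?_ ?_ ?_ ?_ ?_ ?_ ?_).shift (- p (s 1)) ?_ ?_ ?_ ?_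
    any_goals ring
    all_goals first | assumption | (apply Ne.symm; assumption)
  · intro c
    refine (hq.t4 c (s 0) (s 2) (s 3) (s 4) ?_ ?_ ?_ ?_ ?_ ?_ ?_ ?_ ?_ ?_).shift (- q (s 0)) ?_ ?_ ?_ ?_
    any_goals ring
    all_goals first | assumption | (apply Ne.symm; assumption)
  · intro c k l m hk hl hm hkl hkm hlm ht
    have n0 : ∀ u ∈ ({2, 3, 4} : Finset (Fin 5)), s u ≠ s 0 := by
      intro u hu; rw [s.injective.ne_iff]; rintro rfl; revert hu; decide
    have n1 : ∀ u ∈ ({2, 3, 4} : Finset (Fin 5)), s u ≠ s 1 := by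
      intro u hu; rw [s.injective.ne_iff]; rintro rfl; revert hu; decide
    refine hcon (s k) (s l) (s m) c (n0 k hk) (n0 l hl) (n0 m hm) (n1 k hk) (n1 l hl) (n1 m hm)
      (s.injective.ne hkl) (s.injective.ne hkm) (s.injective.ne hlm) ?_
    obtain ⟨t1, t2, t3, t4, t5, t6⟩ := ht
    refine ⟨?_, ?_, ?_, ?_, ?_, ?_⟩ <;> dsimp only <;> linarith

lemma cover5 {i j k l m : Fin 5} (h1 : i ≠ j) (h2 : k ≠ i) (h3 : l ≠ i) (h4 : m ≠ i) (h5 : k ≠ j)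
    (h6 : l ≠ j) (h7 : m ≠ j) (h8 : k ≠ l) (h9 : k ≠ m) (h10 : l ≠ m) (a : Fin 5) :
    a = i ∨ a = j ∨ a = k ∨ a = l ∨ a = m := by
  obtain ⟨s, rfl, rfl, rfl, rfl, rfl⟩ :=
    exists_perm5 i j k l m h1 h2.symm h3.symm h4.symm h5.symm h6.symm h7.symm h8 h9 h10
  obtain ⟨b, rfl⟩ := s.surjective a
  fin_cases b <;> simp

lemma or_aux {a b c d e : Prop} (h : a ∨ b ∨ c ∨ d ∨ e) (h1 : ¬ a) (h2 : ¬ b) : c ∨ d ∨ e := by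
  tauto

set_option maxHeartbeats 1000000 in
lemma core3 {κ : Type} {x : Fin 5 → κ → ℝ} (hx : ¬ Kap 3 x) {i j k l m : Fin 5}
    (hij : i ≠ j) (hki : k ≠ i) (hli : l ≠ i) (hmi : m ≠ i) (hkj : k ≠ j) (hlj : l ≠ j) (hmj : m ≠ j)
    (hkl : k ≠ l) (hkm : k ≠ m) (hlm : l ≠ m)
    {p q r : Fin 5 → ℝ} (hp : Q x i p) (hq : Q x j q) (hr : Q x k r) {u : κ}
    (hu : Tr (fun v => x v u) p q i j k l m) (ht : 0 < (q m - q k) - (p m - p k)) : False := by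
  have covV := cover5 hki hkl.symm hkm.symm hkj.symm hli hmi hij.symm hlm hlj hmj
  have covW := cover5 hkj hkl.symm hkm.symm hki.symm hlj hmj hij hlm hli hmi
  obtain ⟨t, ht'⟩ : ∃ t, t = (q m - q k) - (p m - p k) := ⟨_, rfl⟩
  obtain ⟨c, hc⟩ : ∃ c, c = (r m - p m) - (r l - p l) := ⟨_, rfl⟩
  obtain ⟨e, he⟩ : ∃ e, e = (r j - p j) - (r l - p l) := ⟨_, rfl⟩
  obtain ⟨d, hd⟩ : ∃ d, d = (r i - (q i - q k + p k)) - (r l - p l) := ⟨_, rfl⟩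
  rw [← ht'] at ht
  have U : c < 0 ∨ d < 0 ∨ e < 0 := by
    have h1 := (hr.t4 u l m i j hkl.symm hkm.symm hki.symm hkj.symm hlm hli hlj hmi hmj hij).1
    obtain ⟨u1, u2, u3, u4, u5, u6⟩ := hu
    dsimp only at *
    rcases h1 with h1 | h1 | h1
    · left; linarith
    · right; left; linarith
    · right; right; linarith
  have hkl' : p k - p l = q k - q l := by
    obtain ⟨u1, u2, u3, u4, u5, u6⟩ := hu
    dsimp only at *
    linarith
  clear hu
  have V : (c = 0 ∧ 0 < d) ∨ (e = 0 ∧ 0 < d) ∨ c = e := by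
    obtain ⟨k', l', m', v, n1, n2, n3, n4, n5, n6, n7, n8, n9, v1, v2, v3, v4, v5, v6⟩ :=
      trouble3 hx hki hr hp
    obtain ⟨h1, h2, h3, h4⟩ := (hq.t4 v k l m i hkj hlj hmj hij hkl hkm hki hlm hli hmi)
    dsimp only at *
    have a1 : k' = l ∨ k' = m ∨ k' = j := or_aux (covV k') n1 n4
    have a2 : l' = l ∨ l' = m ∨ l' = j := or_aux (covV l') n2 n5
    have a3 : m' = l ∨ m' = m ∨ m' = j := or_aux (covV m') n3 n6
    rcases a1 with rfl | rfl | rfl <;> rcases a2 with rfl | rfl | rfl <;>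
      first
      | exact absurd rfl n7
      | (rcases a3 with rfl | rfl | rfl <;>
          first
          | exact absurd rfl n8
          | exact absurd rfl n9
          | (right; right; linarith)
          | (left; refine ⟨by linarith, ?_⟩; rcases h2 with h | h | h <;> linarith)
          | (right; left; refine ⟨by linarith, ?_⟩; rcases h2 with h | h | h <;> linarith))
  have W : (c = t ∧ t < e) ∨ (d = 0 ∧ (0 < c ∨ 0 < e)) ∨ (d = c - t ∧ c < e) := by
    obtain ⟨k', l', m', v, n1, n2, n3, n4, n5, n6, n7, n8, n9, v1, v2, v3, v4, v5, v6⟩ :=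
      trouble3 hx hkj hr hq
    obtain ⟨h1, h2, h3, h4⟩ := (hp.t4 v k l m j hki hli hmi hij.symm hkl hkm hkj hlm hlj hmj)
    dsimp only at *
    have a1 : k' = l ∨ k' = m ∨ k' = i := or_aux (covW k') n1 n4
    have a2 : l' = l ∨ l' = m ∨ l' = i := or_aux (covW l') n2 n5
    have a3 : m' = l ∨ m' = m ∨ m' = i := or_aux (covW m') n3 n6
    rcases a1 with rfl | rfl | rfl <;> rcases a2 with rfl | rfl | rfl <;>
      first
      | exact absurd rfl n7
      | (rcases a3 with rfl | rfl | rfl <;>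
          first
          | exact absurd rfl n8
          | exact absurd rfl n9
          | (left; refine ⟨by linarith, ?_⟩; rcases h3 with h | h | h <;> linarith)
          | (right; right; refine ⟨by linarith, ?_⟩; rcases h3 with h | h | h <;> linarith)
          | (right; left; refine ⟨by linarith, ?_⟩;
             rcases h2 with h | h | h
             · linarith
             · left; linarith
             · right; linarith))
  rcases V with ⟨_, _⟩ | ⟨_, _⟩ | _ <;> rcases W with ⟨_, _⟩ | ⟨_, _ | _⟩ | ⟨_, _⟩ <;>
    rcases U with _ | _ | _ <;> linarith

lemma Tr.swap {x p q : Fin 5 → ℝ} {i j k l m : Fin 5} (h : Tr x p q i j k l m) :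
    Tr x q p j i k l m := ⟨h.2.2.2.1, h.2.2.2.2.1, h.2.2.2.2.2, h.1, h.2.1, h.2.2.1⟩

lemma rank3 {κ : Type} (x : Fin 5 → κ → ℝ) (h : ∀ i, ∃ q, Q x i q) : Kap 3 x := by
  by_contra hx
  choose q hq using h
  by_cases hall : ∀ i j k l, i ≠ j → k ≠ i → k ≠ j → l ≠ i → l ≠ j → k ≠ l → q i k - q i l = q j k - q j l
  · obtain ⟨k, l, m, v, n1, n2, n3, n4, n5, n6, n7, n8, n9, v1, v2, v3, v4, v5, v6⟩ :=
      trouble3 hx (show (0 : Fin 5) ≠ 1 by decide) (hq 0) (hq 1)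
    have h1 := ((hq k).t4 v l m 0 1 n7.symm n8.symm n1.symm n4.symm n9 n2 n5 n3 n6 (by decide)).1
    dsimp only at *
    have e1 := hall k 0 l m n1 n7.symm n2 n8.symm n3 n9
    have e2 := hall k 0 l 1 n1 n7.symm n2 n4.symm (by decide) n5
    have e3 := hall k 1 l 0 n4 n7.symm n5 n1.symm (by decide) n2
    rcases h1 with h1 | h1 | h1 <;> linarith
  · push Not at hall
    obtain ⟨i, j, a, b, hij, ha1, ha2, hb1, hb2, hab, hne⟩ := hall
    obtain ⟨k, l, m, v, n1, n2, n3, n4, n5, n6, n7, n8, n9, hv⟩ := trouble3 hx hij (hq i) (hq j)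
    have key : q j m - q j k - (q i m - q i k) ≠ 0 := by
      intro h0
      obtain ⟨v1, v2, v3, v4, v5, v6⟩ := hv
      dsimp only at *
      have a1 : a = k ∨ a = l ∨ a = m := or_aux (cover5 hij n1 n2 n3 n4 n5 n6 n7 n8 n9 a) ha1 ha2
      have a2 : b = k ∨ b = l ∨ b = m := or_aux (cover5 hij n1 n2 n3 n4 n5 n6 n7 n8 n9 b) hb1 hb2
      apply hne
      rcases a1 with rfl | rfl | rfl <;> rcases a2 with rfl | rfl | rfl <;> linarith
    rcases lt_or_gt_of_ne key with h0 | h0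
    · exact core3 hx hij.symm n4 n5 n6 n1 n2 n3 n7 n8 n9 (hq j) (hq i) (hq k) hv.swap (by linarith)
    · exact core3 hx hij n1 n2 n3 n4 n5 n6 n7 n8 n9 (hq i) (hq j) (hq k) hv h0

lemma leafA (x0 x1 x2 x3 a2 a3 b2 b3 : ℝ) (h2 : T3 (a2 + x0) (b2 + x1) x2)
    (h3 : T3 (a3 + x0) (b3 + x1) x3)
    (h : ¬ (a2 + x0 = b2 + x1 ∧ a2 + x0 < x2 ∧ a3 + x0 = b3 + x1 ∧ a3 + x0 < x3)) :
    T3 (min (a2 + b3) (a3 + b2) + x0) (b3 + x2) (b2 + x3) := by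
  unfold T3 at *
  obtain ⟨C00, C01, C02⟩ := h2
  obtain ⟨C10, C11, C12⟩ := h3
  refine ⟨?_, ?_, ?_⟩ <;> rcases min_cases (a2 + b3) (a3 + b2) with ⟨e1, e2⟩ | ⟨e1, e2⟩ <;>
    rw [e1] <;> clear e1 <;> grind (splits := 40)

lemma leafB (x0 x1 x2 x3 x4 a2 a3 a4 b2 b3 b4 : ℝ) (h2 : T3 (a2 + x0) (b2 + x1) x2)
    (h3 : T3 (a3 + x0) (b3 + x1) x3) (h4 : T3 (a4 + x0) (b4 + x1) x4)
    (h23 : ¬ (a2 + x0 = b2 + x1 ∧ a2 + x0 < x2 ∧ a3 + x0 = b3 + x1 ∧ a3 + x0 < x3))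
    (h24 : ¬ (a2 + x0 = b2 + x1 ∧ a2 + x0 < x2 ∧ a4 + x0 = b4 + x1 ∧ a4 + x0 < x4))
    (h34 : ¬ (a3 + x0 = b3 + x1 ∧ a3 + x0 < x3 ∧ a4 + x0 = b4 + x1 ∧ a4 + x0 < x4)) :
    T3 (min (a3 + b4) (a4 + b3) + x2) (min (a2 + b4) (a4 + b2) + x3)
      (min (a2 + b3) (a3 + b2) + x4) := by
  unfold T3 at *
  obtain ⟨C00, C01, C02⟩ := h2
  obtain ⟨C10, C11, C12⟩ := h3
  obtain ⟨C20, C21, C22⟩ := h4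
  refine ⟨?_, ?_, ?_⟩ <;> rcases min_cases (a2 + b3) (a3 + b2) with ⟨e1, e2⟩ | ⟨e1, e2⟩ <;>
    rcases min_cases (a2 + b4) (a4 + b2) with ⟨f1, f2⟩ | ⟨f1, f2⟩ <;>
    rcases min_cases (a3 + b4) (a4 + b3) with ⟨g1, g2⟩ | ⟨g1, g2⟩ <;>
    rw [e1, f1, g1] <;> clear e1 f1 g1 <;> grind (splits := 40)

lemma t3_all (p : Fin 5 → Fin 5 → ℝ) (x : Fin 5 → ℝ) (hs : ∀ i j, p i j = p j i)
    (h : ∀ i j l, i < j → j < l → T3 (p j l + x i) (p i l + x j) (p i j + x l)) :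
    ∀ i j l, i ≠ j → i ≠ l → j ≠ l →
      p i l + x j ≤ p i j + x l ∨ p j l + x i ≤ p i j + x l := by
  intro i j l h1 h2 h3
  rcases lt_or_gt_of_ne h1 with a | a <;> rcases lt_or_gt_of_ne h2 with b | b <;>
    rcases lt_or_gt_of_ne h3 with c | c
  · exact (h i j l a c).2.2.symm
  · have := (h i l j b c).2.1
    rw [hs l j] at this
    exact this.symm
  · exact absurd (a.trans c) (not_lt.2 b.le)
  · have := (h l i j b a).1
    rw [hs l j, hs l i] at this
    exact this.symm
  · have := (h j i l a b).2.2
    rw [hs j i] at this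
    exact this
  · exact absurd (a.trans b) (not_lt.2 c.le)
  · have := (h j l i c b).2.1
    rw [hs j i, hs l i] at this
    exact this
  · have := (h l j i c a).1
    rw [hs l j, hs l i, hs j i] at this
    exact this

lemma T3.swap {a b c : ℝ} (h : T3 a b c) : T3 b a c := by
  unfold T3 at *; tauto

lemma T3.rot {a b c : ℝ} (h : T3 a b c) : T3 b c a := by
  unfold T3 at *; tauto

lemma T3.shift {a b c : ℝ} (s : ℝ) (h : T3 a b c) {a' b' c' : ℝ} (ha : a' = a + s)
    (hb : b' = b + s) (hc : c' = c + s) : T3 a' b' c' := by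
  subst ha hb hc
  unfold T3 at *
  simpa using h

lemma spine2 {κ : Type} (x : Fin 5 → κ → ℝ) (a b : Fin 5 → ℝ)
    (H2 : ∀ c, T3 (a 2 + x 0 c) (b 2 + x 1 c) (x 2 c))
    (H3 : ∀ c, T3 (a 3 + x 0 c) (b 3 + x 1 c) (x 3 c))
    (H4 : ∀ c, T3 (a 4 + x 0 c) (b 4 + x 1 c) (x 4 c))
    (h23 : ∀ c, ¬ (a 2 + x 0 c = b 2 + x 1 c ∧ a 2 + x 0 c < x 2 c ∧ a 3 + x 0 c = b 3 + x 1 c ∧ a 3 + x 0 c < x 3 c))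
    (h24 : ∀ c, ¬ (a 2 + x 0 c = b 2 + x 1 c ∧ a 2 + x 0 c < x 2 c ∧ a 4 + x 0 c = b 4 + x 1 c ∧ a 4 + x 0 c < x 4 c))
    (h34 : ∀ c, ¬ (a 3 + x 0 c = b 3 + x 1 c ∧ a 3 + x 0 c < x 3 c ∧ a 4 + x 0 c = b 4 + x 1 c ∧ a 4 + x 0 c < x 4 c)) :
    Kap 2 x := by
  obtain ⟨B0, B1, hB⟩ := spine_realizes a b
  refine kap_two x hB fun c => t3_all _ (fun i => x i c) ?_ ?_
  · intro i j
    fin_cases i <;> fin_cases j <;> rfl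
  · have A01 : ∀ u v, T3 (a u + x 0 c) (b u + x 1 c) (x u c) → T3 (a v + x 0 c) (b v + x 1 c) (x v c) →
        ¬ (a u + x 0 c = b u + x 1 c ∧ a u + x 0 c < x u c ∧ a v + x 0 c = b v + x 1 c ∧ a v + x 0 c < x v c) →
        T3 (min (a u + b v) (a v + b u) + x 0 c) (b v + x u c) (b u + x v c) ∧
        T3 (min (a u + b v) (a v + b u) + x 1 c) (a v + x u c) (a u + x v c) := by
      intro u v hu hv huv
      refine ⟨leafA _ _ _ _ _ _ _ _ hu hv huv, ?_⟩
      have := leafA _ _ _ _ _ _ _ _ hu.swap hv.swap (fun ⟨s1, s2, s3, s4⟩ => huv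
        ⟨s1.symm, s1 ▸ s2, s3.symm, s3 ▸ s4⟩)
      rwa [min_comm, add_comm (b v), add_comm (b u)] at this
    have B23 := A01 2 3 (H2 c) (H3 c) (h23 c)
    have B24 := A01 2 4 (H2 c) (H4 c) (h24 c)
    have B34 := A01 3 4 (H3 c) (H4 c) (h34 c)
    have B := leafB _ _ _ _ _ _ _ _ _ _ _ (H2 c) (H3 c) (H4 c) (h23 c) (h24 c) (h34 c)
    intro i j l hij hjl
    fin_cases i <;> fin_cases j <;> first | (exfalso; revert hij; decide) | skip
    all_goals fin_cases l <;> first | (exfalso; revert hjl; decide) | skip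
    · simpa [spineP] using H2 c
    · simpa [spineP] using H3 c
    · simpa [spineP] using H4 c
    · exact B23.1
    · exact B24.1
    · exact B34.1
    · exact B23.2
    · exact B24.2
    · exact B34.2
    · exact B

def R {κ : Type} (x : Fin 5 → κ → ℝ) (i j k : Fin 5) (p q r : ℝ) : Prop :=
  ∀ c, T3 (p + x i c) (q + x j c) (r + x k c)

def D {κ : Type} (x : Fin 5 → κ → ℝ) (i j k l : Fin 5) (p q r p' q' r' : ℝ) : Prop :=
  ∃ c, p + x i c = q + x j c ∧ p + x i c < r + x k c ∧ p' + x i c = q' + x j c ∧ p' + x i c < r' + x l c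

lemma trouble2 {κ : Type} {x : Fin 5 → κ → ℝ} (hx : ¬ Kap 2 x) {i j k l m : Fin 5}
    (hij : i ≠ j) (hki : k ≠ i) (hli : l ≠ i) (hmi : m ≠ i) (hkj : k ≠ j) (hlj : l ≠ j) (hmj : m ≠ j)
    (hkl : k ≠ l) (hkm : k ≠ m) (hlm : l ≠ m) {p q r p' q' r' p'' q'' r'' : ℝ}
    (h1 : R x i j k p q r) (h2 : R x i j l p' q' r') (h3 : R x i j m p'' q'' r'') :
    D x i j k l p q r p' q' r' ∨ D x i j k m p q r p'' q'' r'' ∨ D x i j l m p' q' r' p'' q'' r'' := by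
  by_contra hcon
  simp only [not_or, D, not_exists] at hcon
  obtain ⟨c1, c2, c3⟩ := hcon
  apply hx
  obtain ⟨s, rfl, rfl, rfl, rfl, rfl⟩ := exists_perm5 i j k l m hij hki.symm hli.symm hmi.symm hkj.symm
    hlj.symm hmj.symm hkl hkm hlm
  refine Kap.perm s (spine2 _ ![0, 0, p - r, p' - r', p'' - r''] ![0, 0, q - r, q' - r', q'' - r'']
    (fun c => ?_) (fun c => ?_) (fun c => ?_) (fun c hc => ?_) (fun c hc => ?_) (fun c hc => ?_))
  · exact (h1 c).shift (-r) (by simp; ring) (by simp; ring) (by ring)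
  · exact (h2 c).shift (-r') (by simp; ring) (by simp; ring) (by ring)
  · exact (h3 c).shift (-r'') (by simp; ring) (by simp; ring) (by ring)
  · simp at hc
    obtain ⟨d1, d2, d3, d4⟩ := hc
    exact c1 c ⟨by linarith, by linarith, by linarith, by linarith⟩
  · simp at hc
    obtain ⟨d1, d2, d3, d4⟩ := hc
    exact c2 c ⟨by linarith, by linarith, by linarith, by linarith⟩
  · simp at hc
    obtain ⟨d1, d2, d3, d4⟩ := hc
    exact c3 c ⟨by linarith, by linarith, by linarith, by linarith⟩

/-- normal form of four rows -/
structure NF {κ : Type} (x : Fin 5 → κ → ℝ) (i j k l : Fin 5) (y1 y2 y3 y4 e : ℝ) : Prop where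
  he : 0 ≤ e
  h123 : R x i j k y1 y2 y3
  h134 : R x i k l y1 (y3 - e) (y4 - e)
  h124 : R x i j l y1 y2 y4
  h234 : R x j k l y2 (y3 - e) (y4 - e)
  n : ∀ c, ¬ (y1 + x i c = y3 + x k c ∧ y1 + x i c < y2 + x j c ∧ e = 0 ∧ y1 + x i c < y4 + x l c)

lemma NF.mirror {κ : Type} {x : Fin 5 → κ → ℝ} {i j k l : Fin 5} {y1 y2 y3 y4 e : ℝ}
    (h : NF x i j k l y1 y2 y3 y4 e) : NF x k l i j y3 y4 (y1 + e) (y2 + e) e := by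
  refine ⟨h.he, fun c => ?_, fun c => ?_, fun c => ?_, fun c => ?_, ?_⟩
  · exact (h.h134 c).rot.shift e (by ring) (by ring) (by ring)
  · exact (h.h123 c).rot.rot.shift 0 (by ring) (by ring) (by ring)
  · exact (h.h234 c).rot.shift e (by ring) (by ring) (by ring)
  · exact (h.h124 c).rot.rot.shift 0 (by ring) (by ring) (by ring)
  · rintro c ⟨d1, d2, d3, d4⟩
    exact h.n c ⟨by linarith, by linarith, d3, by linarith⟩

lemma R.rot {κ : Type} {x : Fin 5 → κ → ℝ} {i j k : Fin 5} {p q r : ℝ} (h : R x i j k p q r) :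
    R x j k i q r p := fun c => (h c).rot

lemma R.swap {κ : Type} {x : Fin 5 → κ → ℝ} {i j k : Fin 5} {p q r : ℝ} (h : R x i j k p q r) :
    R x j i k q p r := fun c => (h c).swap

lemma core2 {κ : Type} {x : Fin 5 → κ → ℝ} (hx : ¬ Kap 2 x) {i j k l m : Fin 5}
    (hij : i ≠ j) (hki : k ≠ i) (hli : l ≠ i) (hmi : m ≠ i) (hkj : k ≠ j) (hlj : l ≠ j) (hmj : m ≠ j)
    (hkl : k ≠ l) (hkm : k ≠ m) (hlm : l ≠ m) {y1 y2 y3 y4 e : ℝ}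
    (h : NF x i j k l y1 y2 y3 y4 e) {p1 p3 p5 : ℝ} (h135 : R x i k m p1 p3 p5)
    {q2 q3 q5 : ℝ} (h235 : R x j k m q2 q3 q5) {r1 r4 r5 : ℝ} (h145 : R x i l m r1 r4 r5)
    (ht : D x i k j m y1 y3 y2 p1 p3 p5) : False := by
  obtain ⟨z, z1, z2, z3, z4⟩ := ht
  have he := h.he
  obtain ⟨a1, a2, a3⟩ := h.h123 z
  obtain ⟨b1, b2, b3⟩ := h.h134 z
  have nz := h.n z
  obtain ⟨c1, c2, c3⟩ := h235 z
  obtain ⟨d1, d2, d3⟩ := h145 z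
  -- the coordinate of row 4 in the column z
  have z5 : y4 + x l z = y3 + x k z := by
    rcases he.eq_or_lt with h0 | h0
    · subst h0
      have : ¬ (y1 + x i z < y4 + x l z) := fun hh => nz ⟨z1, z2, rfl, hh⟩
      rcases b3 with b3 | b3 <;> linarith
    · rcases b2 with b2 | b2
      · linarith
      · rcases b3 with b3 | b3 <;> linarith
  rcases trouble2 hx hkj.symm hij hlj hmj hki.symm hkl.symm hkm.symm hli.symm hmi.symm hlm h.h123.rot h.h234 h235 with
    ⟨w, w1, w2, w3, w4⟩ | ⟨w, w1, w2, w3, w4⟩ | ⟨w, w1, w2, w3, w4⟩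
  · obtain ⟨f1, f2, f3⟩ := h.h134 w
    rcases f2 with f2 | f2 <;> linarith
  · obtain ⟨f1, f2, f3⟩ := h135 w
    rcases f2 with f2 | f2
    · linarith
    · rcases c2 with c2 | c2 <;> linarith
  · obtain ⟨f1, f2, f3⟩ := h.h134 w
    have w5 : y1 + x i w = y3 - e + x k w := by
      rcases f2 with f2 | f2
      · rcases f1 with f1 | f1 <;> linarith
      · linarith
    obtain ⟨g1, g2, g3⟩ := h135 w
    rcases he.eq_or_lt with h0 | h0
    · subst h0
      obtain ⟨s1, s2, s3⟩ := h145 w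
      rcases trouble2 hx hli.symm hij.symm hki hmi hlj.symm hkl hlm.symm hkj.symm hmj.symm hkm h.h124.rot.rot.swap h.h134.rot.rot.swap h145 with
        ⟨v, v1, v2, v3, v4⟩ | ⟨v, v1, v2, v3, v4⟩ | ⟨v, v1, v2, v3, v4⟩
      · obtain ⟨f1, f2, f3⟩ := h.h123 v
        rcases f1 with f1 | f1 <;> linarith
      · have t1 : r5 + x m w ≤ r1 + x i w := by rcases s1 with s1 | s1 <;> linarith
        have t2 : q5 + x m z ≤ q3 + x k z := by rcases c2 with c2 | c2 <;> linarith
        rcases d3 with d3 | d3 <;> linarith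
      · have t1 : r5 + x m w ≤ r1 + x i w := by rcases s1 with s1 | s1 <;> linarith
        have t2 : q5 + x m z ≤ q3 + x k z := by rcases c2 with c2 | c2 <;> linarith
        rcases d3 with d3 | d3 <;> linarith
    · rcases g1 with g1 | g1
      · linarith
      · rcases c2 with c2 | c2 <;> linarith

lemma nf_finish {κ : Type} {x : Fin 5 → κ → ℝ} (hx : ¬ Kap 2 x)
    (H : ∀ i j k, i ≠ j → i ≠ k → j ≠ k → ∃ p q r, R x i j k p q r) {i j k l m : Fin 5}
    (hij : i ≠ j) (hki : k ≠ i) (hli : l ≠ i) (hmi : m ≠ i) (hkj : k ≠ j) (hlj : l ≠ j) (hmj : m ≠ j)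
    (hkl : k ≠ l) (hkm : k ≠ m) (hlm : l ≠ m) {y1 y2 y3 y4 e : ℝ}
    (h : NF x i j k l y1 y2 y3 y4 e) : False := by
  obtain ⟨p1, p3, p5, h135⟩ := H i k m hki.symm hmi.symm hkm
  obtain ⟨_, _, _, h235⟩ := H j k m hkj.symm hmj.symm hkm
  obtain ⟨_, _, _, h145⟩ := H i l m hli.symm hmi.symm hlm
  rcases trouble2 hx hki.symm hij.symm hli hmi hkj.symm hkl.symm hkm.symm hlj.symm hmj.symm hlm
    h.h123.rot.rot.swap h.h134 h135 with hD | hD | hD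
  · obtain ⟨w, w1, w2, w3, w4⟩ := hD
    exact h.n w ⟨w1, w2, by linarith, by linarith⟩
  · exact core2 hx hij hki hli hmi hkj hlj hmj hkl hkm hlm h h135 h235 h145 hD
  · refine core2 hx hkl hki.symm hkj.symm hkm.symm hli.symm hlj.symm hlm.symm hij hmi.symm hmj.symm h.mirror
      h135.swap h145.swap h235.swap ?_
    obtain ⟨w, w1, w2, w3, w4⟩ := hD
    exact ⟨w, by linarith, by linarith, by linarith, by linarith⟩

lemma nf_make {κ : Type} {x : Fin 5 → κ → ℝ} {i j k l : Fin 5} {y1 y2 y3 y4 e : ℝ} (he : 0 ≤ e)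
    (h1 : R x i j k y1 y2 y3) (h2 : R x i k l y1 (y3 - e) (y4 - e))
    (h : ¬ D x i k j l y1 y3 y2 y1 (y3 - e) (y4 - e)) : NF x i j k l y1 y2 y3 y4 e := by
  have n : ∀ c, ¬ (y1 + x i c = y3 + x k c ∧ y1 + x i c < y2 + x j c ∧ e = 0 ∧ y1 + x i c < y4 + x l c) := by
    rintro c ⟨d1, d2, d3, d4⟩
    exact h ⟨c, d1, d2, by linarith, by linarith⟩
  refine ⟨he, h1, h2, fun c => ?_, fun c => ?_, n⟩
  · obtain ⟨a1, a2, a3⟩ := h1 c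
    obtain ⟨b1, b2, b3⟩ := h2 c
    have := n c
    clear h1 h2 n h
    refine ⟨?_, ?_, ?_⟩ <;> grind (splits := 30)
  · obtain ⟨a1, a2, a3⟩ := h1 c
    obtain ⟨b1, b2, b3⟩ := h2 c
    have := n c
    clear h1 h2 n h
    refine ⟨?_, ?_, ?_⟩ <;> grind (splits := 30)

lemma no_free_spine {κ : Type} {x : Fin 5 → κ → ℝ} (hx : ¬ Kap 2 x)
    (H : ∀ i j k, i ≠ j → i ≠ k → j ≠ k → ∃ p q r, R x i j k p q r) {i j k l m : Fin 5}
    (hij : i ≠ j) (hki : k ≠ i) (hli : l ≠ i) (hmi : m ≠ i) (hkj : k ≠ j) (hlj : l ≠ j) (hmj : m ≠ j)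
    (hkl : k ≠ l) (hkm : k ≠ m) (hlm : l ≠ m) {p1 p2 p3 q1 q3 q4 : ℝ}
    (h1 : R x i j k p1 p2 p3) (h2 : R x i k l q1 q3 q4) : D x i k j l p1 p3 p2 q1 q3 q4 := by
  by_contra hD
  rcases le_total 0 ((p3 - p1) - (q3 - q1)) with h0 | h0
  · refine nf_finish hx H hij hki hli hmi hkj hlj hmj hkl hkm hlm
      (nf_make (y1 := p1) (y2 := p2) (y3 := p3) (y4 := q4 - q1 + p1 + ((p3 - p1) - (q3 - q1))) h0 h1 ?_ ?_)
    · exact fun c => (h2 c).shift (p1 - q1) (by ring) (by ring) (by ring)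
    · rintro ⟨c, d1, d2, d3, d4⟩
      exact hD ⟨c, d1, d2, by linarith, by linarith⟩
  · refine nf_finish hx H hli.symm hki hij.symm hmi hkl hlj.symm hlm.symm hkj hkm hmj.symm
      (nf_make (y1 := q1) (y2 := q4) (y3 := q3) (y4 := p2 - p1 + q1 + ((q3 - q1) - (p3 - p1)))
        (e := (q3 - q1) - (p3 - p1)) (by linarith) h2.rot.rot.swap ?_ ?_)
    · exact fun c => (h1.rot.rot.swap c).shift (q1 - p1) (by ring) (by ring) (by ring)
    · rintro ⟨c, d1, d2, d3, d4⟩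
      exact hD ⟨c, by linarith, by linarith, by linarith, by linarith⟩

lemma rank2 {κ : Type} (x : Fin 5 → κ → ℝ)
    (H : ∀ i j k, i ≠ j → i ≠ k → j ≠ k → ∃ p q r, R x i j k p q r) : Kap 2 x := by
  by_contra hx
  obtain ⟨p0, p1, p2, hp⟩ := H 0 1 2 (by decide) (by decide) (by decide)
  obtain ⟨q0, q1, q3, hq⟩ := H 0 1 3 (by decide) (by decide) (by decide)
  obtain ⟨r0, r2, r3, hr⟩ := H 0 2 3 (by decide) (by decide) (by decide)
  -- spine 0 1, leaves 2 3
  obtain ⟨u, u1, u2, u3, u4⟩ := no_free_spine hx H (i := 0) (j := 2) (k := 1) (l := 3) (m := 4) (by decide) (by decide) (by decide) (by decide)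
    (by decide) (by decide) (by decide) (by decide) (by decide) (by decide) hp.rot.rot.swap hq
  obtain ⟨v, v1, v2, v3, v4⟩ := no_free_spine hx H (i := 0) (j := 1) (k := 2) (l := 3) (m := 4) (by decide) (by decide) (by decide) (by decide)
    (by decide) (by decide) (by decide) (by decide) (by decide) (by decide) hp hr
  obtain ⟨w, w1, w2, w3, w4⟩ := no_free_spine hx H (i := 0) (j := 1) (k := 3) (l := 2) (m := 4) (by decide) (by decide) (by decide) (by decide)
    (by decide) (by decide) (by decide) (by decide) (by decide) (by decide) hq hr.rot.rot.swap
  obtain ⟨f1, f2, f3⟩ := hr u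
  rcases f1 with f1 | f1 <;> linarith

/-! ### The case of five rows -/

lemma Kap.mono {κ : Type} {r s : ℕ} {x : Fin 5 → κ → ℝ} (h : Kap r x) (hrs : r ≤ s) : Kap s x := by
  obtain ⟨V, h1, h2⟩ := h
  exact ⟨V, h1.trans hrs, h2⟩

lemma minor_weights {n m : ℕ} (x : Fin 5 → Fin n → ℝ) (ri : Fin m → Fin 5) (hri : Function.Injective ri)
    (h : ∀ (ri : Fin m → Fin 5) (ci : Fin m → Fin n), Function.Injective ri → Function.Injective ci →
      TropSingular (fun i j => x (ri i) (ci j))) :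
    ∃ l : Fin m → ℝ, ∀ k i, ∃ j, j ≠ i ∧ l j + x (ri j) k ≤ l i + x (ri i) k := by
  refine maxMinor (fun i k => x (ri i) k) fun s => ?_
  by_cases hs : Function.Injective s
  · exact h ri s hri hs
  · simp only [Function.Injective, not_forall] at hs
    obtain ⟨a, b, hab, hne⟩ := hs
    exact tropSingular_of_col hne fun i => by simp [hab]

lemma main5 {n : ℕ} (x : Fin 5 → Fin n → ℝ) (r : ℕ)
    (h : ∀ (ri : Fin (r + 1) → Fin 5) (ci : Fin (r + 1) → Fin n), Function.Injective ri →
      Function.Injective ci → TropSingular (fun i j => x (ri i) (ci j))) : Kap r x := by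
  match r, h with
  | 0, h =>
    have : IsEmpty (Fin n) := by
      refine ⟨fun k => ?_⟩
      obtain ⟨l, hl⟩ := minor_weights (m := 1) x (fun _ => 0) (fun a b _ => Subsingleton.elim a b) h
      obtain ⟨j, hj, _⟩ := hl k 0
      exact hj (Subsingleton.elim (α := Fin 1) _ _)
    exact kap_zero x
  | 1, h =>
    have key : ∀ i : Fin 5, ∃ a : ℝ, ∀ k, x i k = a + x 0 k := by
      intro i
      by_cases hi : i = 0
      · exact ⟨0, fun k => by simp [hi]⟩
      · obtain ⟨l, hl⟩ := minor_weights (m := 2) x ![0, i] (by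
          intro a b
          fin_cases a <;> fin_cases b <;> simp [hi, Ne.symm hi]) h
        refine ⟨l 0 - l 1, fun k => ?_⟩
        obtain ⟨j, hj, h1⟩ := hl k 0
        obtain ⟨j', hj', h2⟩ := hl k 1
        have e1 : j = 1 := by omega
        have e2 : j' = 0 := by omega
        subst e1 e2
        simp at h1 h2
        linarith
    choose a ha using key
    exact kap_one x a (fun k => x 0 k) ha
  | 2, h =>
    refine rank2 x fun i j k hij hik hjk => ?_
    obtain ⟨l, hl⟩ := minor_weights x ![i, j, k] (by
      intro a b
      fin_cases a <;> fin_cases b <;> simp [hij, hik, hjk, hij.symm, hik.symm, hjk.symm]) h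
    refine ⟨l 0, l 1, l 2, fun c => ?_⟩
    have h0 := hl c 0
    have h1 := hl c 1
    have h2 := hl c 2
    simp [Fin.exists_fin_succ] at h0 h1 h2
    exact ⟨h0, h1, h2⟩
  | 3, h =>
    refine rank3 x fun i => ?_
    obtain ⟨l, hl⟩ := minor_weights x i.succAbove Fin.succAbove_right_injective h
    refine ⟨i.insertNth 0 l, fun c j hj => ?_⟩
    obtain ⟨j', rfl⟩ := Fin.exists_succAbove_eq hj
    obtain ⟨t, ht1, ht2⟩ := hl c j'
    exact ⟨i.succAbove t, Fin.succAbove_ne i t, by simpa using ht1, by simpa using ht2⟩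
  | 4, h =>
    obtain ⟨l, hl⟩ := minor_weights x id Function.injective_id h
    exact kap_four x l hl
  | r + 5, h => exact (kap_five x).mono (by omega)

/-! ### Ranks -/

lemma isVal_prod {m : ℕ} (f : Fin m → K) (a : Fin m → ℝ) (h : ∀ i, IsVal (f i) (a i)) (s : Finset (Fin m)) :
    IsVal (∏ i ∈ s, f i) (∑ i ∈ s, a i) := by
  classical
  induction s using Finset.induction_on with
  | empty => simpa using isVal_one
  | insert i s hi ih =>
    rw [Finset.prod_insert hi, Finset.sum_insert hi]
    exact (h i).mul ih

lemma det_lift_ne {m : ℕ} {M : Matrix (Fin m) (Fin m) ℝ} {B : Matrix (Fin m) (Fin m) K}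
    (hB : ∀ i j, IsVal (B i j) (M i j)) (h : ¬ TropSingular M) : B.det ≠ 0 := by
  obtain ⟨σ, hσ⟩ := exists_min_perm M
  have hu : ∀ ρ, ρ ≠ σ → ∑ i, M i (σ i) < ∑ i, M i (ρ i) := by
    intro ρ hρ
    refine lt_of_le_of_ne (hσ ρ) fun he => h ⟨σ, ρ, hρ.symm, he, hσ⟩
  have ht : ∀ ρ : Equiv.Perm (Fin m), IsVal (Equiv.Perm.sign ρ • ∏ i, B i (ρ i)) (∑ i, M i (ρ i)) := by
    intro ρ
    have h1 := isVal_prod (fun i => B i (ρ i)) (fun i => M i (ρ i)) (fun i => hB _ _) Finset.univ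
    rcases Int.units_eq_one_or (Equiv.Perm.sign ρ) with e | e
    · rw [e, one_smul]; exact h1
    · rw [e, Units.neg_smul, one_smul]; exact h1.neg
  intro h0
  rw [← Matrix.det_transpose, Matrix.det_apply] at h0
  have h1 := congrArg (fun f : K => f.coeff (∑ i, M i (σ i))) h0
  simp only [HahnSeries.coeff_sum, HahnSeries.coeff_zero, Matrix.transpose_apply] at h1
  rw [Finset.sum_eq_single σ] at h1
  · exact (isVal_iff.1 (ht σ)).2 h1
  · intro ρ _ hρ
    exact low_iff.1 (ht ρ).low _ (hu ρ hρ)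
  · intro hh; exact absurd (Finset.mem_univ _) hh

lemma rank_lift {d n r : ℕ} {A : Matrix (Fin d) (Fin n) ℝ} {B : Matrix (Fin d) (Fin n) K}
    (hB : IsLift A B) (ri : Fin r → Fin d) (ci : Fin r → Fin n)
    (h : ¬ TropSingular (A.submatrix ri ci)) : r ≤ B.rank := by
  have hd : (B.submatrix ri ci).det ≠ 0 :=
    det_lift_ne (fun i j => isVal_of_order (hB _ _).1 (hB _ _).2) h
  have h1 : (B.submatrix ri ci).rank = r := by
    have := Matrix.rank_of_isUnit (B.submatrix ri ci) ((Matrix.isUnit_iff_isUnit_det _).2 (isUnit_iff_ne_zero.2 hd))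
    simpa using this
  rw [← h1]
  exact Matrix.rank_submatrix_le B ri ci

lemma exists_lift {d n : ℕ} (hd : d ≤ 5) (A : Matrix (Fin d) (Fin n) ℝ) (r : ℕ)
    (h : ∀ (ri : Fin (r + 1) → Fin d) (ci : Fin (r + 1) → Fin n), Function.Injective ri →
      Function.Injective ci → TropSingular (A.submatrix ri ci)) :
    ∃ B, IsLift A B ∧ B.rank ≤ r := by
  rcases Nat.eq_zero_or_pos d with rfl | hpos
  · refine ⟨fun i _ => i.elim0, fun i => i.elim0, ?_⟩
    refine (Matrix.rank_le_height _).trans (Nat.zero_le _)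
  let f : Fin 5 → Fin d := fun i => ⟨min i (d - 1), by omega⟩
  let g : Fin d → Fin 5 := Fin.castLE hd
  have hfg : ∀ i, f (g i) = i := by
    intro i
    apply Fin.ext
    simp only [f, g, Fin.val_castLE]
    omega
  obtain ⟨V, hV, hv⟩ := main5 (fun i k => A (f i) k) r (by
    intro ri ci hri hci
    by_cases hinj : Function.Injective (f ∘ ri)
    · exact h (f ∘ ri) ci hinj hci
    · simp only [Function.Injective, not_forall] at hinj
      obtain ⟨a, b, hab, hne⟩ := hinj
      refine tropSingular_of_row hne fun i => ?_
      simp only [Function.comp] at hab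
      rw [hab])
  choose v hvV hval using hv
  refine ⟨Matrix.of fun i k => v k (g i), fun i k => ?_, ?_⟩
  · have : IsVal (v k (g i)) (A (f (g i)) k) := hval k (g i)
    rw [hfg] at this
    exact ⟨this.ne_zero, this.order⟩
  · rw [Matrix.rank_eq_finrank_span_cols]
    refine le_trans ?_ ((Submodule.finrank_map_le (LinearMap.funLeft K K g) V).trans hV)
    refine Submodule.finrank_mono (Submodule.span_le.2 ?_)
    rintro _ ⟨k, rfl⟩
    exact ⟨v k, hvV k, rfl⟩

lemma exists_lift' {d n : ℕ} (hd : d ≤ 5 ∨ n ≤ 5) (A : Matrix (Fin d) (Fin n) ℝ) (r : ℕ)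
    (h : ∀ (ri : Fin (r + 1) → Fin d) (ci : Fin (r + 1) → Fin n), Function.Injective ri →
      Function.Injective ci → TropSingular (A.submatrix ri ci)) :
    ∃ B, IsLift A B ∧ B.rank ≤ r := by
  rcases hd with hd | hd
  · exact exists_lift hd A r h
  · obtain ⟨B, hB, hr⟩ := exists_lift hd A.transpose r
      (fun ri ci hri hci => tropSingular_transpose (h ci ri hci hri))
    exact ⟨B.transpose, fun i j => hB j i, by rwa [Matrix.rank_transpose]⟩

/-- For a `d × n` real matrix with `d ≤ 5` or `n ≤ 5`, the tropical rank equals the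
Kapranov rank. -/
theorem tropicalRank_eq_kapranovRank (d n : ℕ) (h : d ≤ 5 ∨ n ≤ 5)
    (A : Matrix (Fin d) (Fin n) ℝ) :
    tropicalRank A = kapranovRank A := by
  have hbdd : BddAbove {r : ℕ | ∃ (ri : Fin r → Fin d) (ci : Fin r → Fin n),
      Function.Injective ri ∧ Function.Injective ci ∧ ¬ TropSingular (A.submatrix ri ci)} := by
    refine ⟨d, ?_⟩
    rintro r ⟨ri, _, hri, _⟩
    simpa using Fintype.card_le_of_injective ri hri
  obtain ⟨B, hB, hr⟩ := exists_lift' h A (tropicalRank A) (by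
    intro ri ci hri hci
    by_contra hns
    have := le_csSup hbdd ⟨ri, ci, hri, hci, hns⟩
    change tropicalRank A + 1 ≤ tropicalRank A at this
    omega)
  apply le_antisymm
  · obtain ⟨B', hB', he⟩ := Nat.sInf_mem (s := {k : ℕ | ∃ B : Matrix (Fin d) (Fin n) K, IsLift A B ∧ B.rank = k})
      ⟨B.rank, B, hB, rfl⟩
    unfold kapranovRank
    rw [← he]
    refine csSup_le' ?_
    rintro r ⟨ri, ci, _, _, hns⟩
    exact rank_lift hB' ri ci hns
  · exact le_trans (Nat.sInf_le (show B.rank ∈ {k : ℕ | ∃ B : Matrix (Fin d) (Fin n) K,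
      IsLift A B ∧ B.rank = k} from ⟨B, hB, rfl⟩)) hr
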